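/- arXiv:2405.08412 — 3 statements merged into one kernel-verified Lean document; each statement's English description precedes it below -/
import Mathlib

section
/- Let X and Y be reflexive Banach spaces, Z a normed vector space, and T : X × Y → Z a continuous bilinear operator. Suppose that for every pair of sequences {x_n} ⊂ X and {y_n} ⊂ Y such that {x_n} converges weakly in X and {y_n} converges weakly in Y, the sequence {T(x_n, y_n)} converges strongly in Z. Then T is compact. -/
open Filter Topology Metric NormedSpace

/-- A sequence converges weakly to a point in a normed space. -/
def WeaklyConvergesTo {𝕜 X : Type*} [NontriviallyNormedField 𝕜] [NormedAddCommGroup X]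
    [NormedSpace 𝕜 X] (x : ℕ → X) (x₀ : X) : Prop :=
  ∀ f : X →L[𝕜] 𝕜, Tendsto (fun n => f (x n)) atTop (𝓝 (f x₀))

/-- A bilinear operator is compact if the closure of the image of the product of the
closed unit balls is compact. -/
def IsCompactBilinear {X Y Z : Type*} [NormedAddCommGroup X] [NormedSpace ℝ X]
    [NormedAddCommGroup Y] [NormedSpace ℝ Y] [NormedAddCommGroup Z] [NormedSpace ℝ Z]
    (T : X →L[ℝ] Y →L[ℝ] Z) : Prop :=
  IsCompact (closure (Set.image2 (fun x y => T x y)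
    (closedBall (0 : X) 1) (closedBall (0 : Y) 1)))

/-!
Eberlein–Šmulian: a weakly compact set `K` is weakly sequentially compact. Indeed, a sequence in `K`
lies in the closed span `M` of its terms, which is weakly closed and norm separable, and on a
norm separable set countably many functionals separate points; so `K ∩ M` is weakly compact and
weakly metrizable. In a reflexive space bounded sets are relatively weakly compact by
Banach–Alaoglu, so bounded sequences have weakly convergent subsequences. Passing to subsequences
in both factors, the images under `T` of two bounded sequences have a strongly convergent
subsequence.
-/

open TopologicalSpace Bornology

section WeakTopology

variable {𝕜 X : Type*} [RCLike 𝕜] [NormedAddCommGroup X] [NormedSpace 𝕜 X]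

theorem exists_countable_dual_separating_of_isSeparable {s : Set X} (hs : IsSeparable s) :
    ∃ G : Set (StrongDual 𝕜 X), G.Countable ∧ ∀ x ∈ s, (∀ g ∈ G, g x = 0) → x = 0 := by
  obtain ⟨c, hc, hsc⟩ := hs
  choose g g_norm_le g_apply_self using fun y : X => exists_dual_vector'' 𝕜 y
  refine ⟨g '' c, hc.image g, fun x hx hgx => ?_⟩
  have norm_le_of_mem (y : X) (hy : y ∈ c) : ‖y‖ ≤ ‖y - x‖ :=
    calc ‖y‖ = ‖g y (y - x)‖ := by
          rw [map_sub, hgx _ (Set.mem_image_of_mem g hy), sub_zero, g_apply_self,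
            RCLike.norm_ofReal, abs_norm]
      _ ≤ 1 * ‖y - x‖ := (g y).le_of_opNorm_le (g_norm_le y) _
      _ = ‖y - x‖ := one_mul _
  have isClosed_norm_le : IsClosed {y : X | ‖y‖ ≤ ‖y - x‖} :=
    isClosed_le continuous_norm (by fun_prop)
  have norm_le : ‖x‖ ≤ ‖x - x‖ := closure_minimal norm_le_of_mem isClosed_norm_le (hsc hx)
  simpa using norm_le

theorem metrizableSpace_of_isCompact_weakSpace_of_isSeparable {K : Set (WeakSpace 𝕜 X)}
    (hK : IsCompact K) (hsep : IsSeparable (toWeakSpace 𝕜 X ⁻¹' K)) : MetrizableSpace K := by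
  have : CompactSpace K := isCompact_iff_compactSpace.mp hK
  obtain ⟨G, hG, eq_zero_of_forall⟩ :=
    exists_countable_dual_separating_of_isSeparable (𝕜 := 𝕜) (hsep.span (R := 𝕜))
  have : Countable G := hG.to_subtype
  have : Encodable G := Encodable.ofCountable G
  let evalAt (g : G) (x : K) : 𝕜 := g.1 ((toWeakSpace 𝕜 X).symm x)
  have continuous_evalAt (g : G) : Continuous (evalAt g) :=
    (WeakBilin.eval_continuous (topDualPairing 𝕜 X).flip g.1).comp continuous_subtype_val
  have separating : Pairwise fun x y => ∃ g, evalAt g x ≠ evalAt g y := by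
    intro x y hxy
    contrapose! hxy
    have sub_mem : (toWeakSpace 𝕜 X).symm x - (toWeakSpace 𝕜 X).symm y ∈
        Submodule.span 𝕜 (toWeakSpace 𝕜 X ⁻¹' K) :=
      sub_mem (Submodule.subset_span x.2) (Submodule.subset_span y.2)
    have diff_eq_zero := eq_zero_of_forall _ sub_mem fun g hg => by
      rw [map_sub, sub_eq_zero]
      exact hxy ⟨g, hg⟩
    exact Subtype.ext ((toWeakSpace 𝕜 X).symm.injective (sub_eq_zero.mp diff_eq_zero))
  exact Metric.PiNatEmbed.TopologicalSpace.MetrizableSpace.of_countable_separating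
    evalAt continuous_evalAt separating

theorem isClosed_toWeakSpace_image_submodule {M : Submodule 𝕜 X} (hM : IsClosed (M : Set X)) :
    IsClosed (toWeakSpace 𝕜 X '' M) := by
  let : NormedSpace ℝ X := NormedSpace.restrictScalars ℝ 𝕜 X
  have : IsScalarTower ℝ 𝕜 X := .restrictScalars ℝ 𝕜 X
  have hconv : Convex ℝ (M : Set X) := (M.restrictScalars ℝ).convex
  rw [← hM.closure_eq, hconv.toWeakSpace_closure 𝕜]
  exact isClosed_closure

theorem isSeqCompact_of_isCompact_weakSpace {K : Set (WeakSpace 𝕜 X)} (hK : IsCompact K) :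
    IsSeqCompact K := by
  intro x hx
  let M : Submodule 𝕜 X :=
    (Submodule.span 𝕜 (Set.range fun n => (toWeakSpace 𝕜 X).symm (x n))).topologicalClosure
  have isSeparable_M : IsSeparable (M : Set X) := (Set.countable_range _).isSeparable.span.closure
  have mem_M (n : ℕ) : x n ∈ toWeakSpace 𝕜 X '' M :=
    ⟨_, Submodule.le_topologicalClosure _ (Submodule.subset_span ⟨n, rfl⟩), rfl⟩
  let L := K ∩ toWeakSpace 𝕜 X '' M
  have isCompact_L : IsCompact L :=
    hK.inter_right (isClosed_toWeakSpace_image_submodule (Submodule.isClosed_topologicalClosure _))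
  have isSeparable_L : IsSeparable (toWeakSpace 𝕜 X ⁻¹' L) := by
    refine isSeparable_M.mono ?_
    rintro y ⟨-, m, hm, hmy⟩
    rwa [← (toWeakSpace 𝕜 X).injective hmy]
  have : CompactSpace L := isCompact_iff_compactSpace.mp isCompact_L
  have : MetrizableSpace L :=
    metrizableSpace_of_isCompact_weakSpace_of_isSeparable isCompact_L isSeparable_L
  have isSeqCompact_L : IsSeqCompact L := isSeqCompact_iff_seqCompactSpace.mpr inferInstance
  obtain ⟨a, ha, hsub⟩ := isSeqCompact_L fun n => ⟨hx n, mem_M n⟩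
  exact ⟨a, ha.1, hsub⟩

theorem isCompact_closure_weakSpace_of_isBounded_of_reflexive
    (hX : Function.Surjective (inclusionInDoubleDual 𝕜 X)) {s : Set X} (hs : IsBounded s) :
    IsCompact (closure (toWeakSpace 𝕜 X '' s)) := by
  have surjective_weak : Function.Surjective (inclusionInDoubleDualWeak 𝕜 X) :=
    StrongDual.toWeakDual.surjective.comp (hX.comp (toWeakSpace 𝕜 X).symm.surjective)
  refine isCompact_closure_of_isBounded 𝕜 X _ ?_ ?_
  · rwa [Set.preimage_image_eq _ (toWeakSpace 𝕜 X).injective]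
  · simp only [surjective_weak.range_eq, Set.subset_univ]

end WeakTopology

namespace WeaklyConvergesTo

variable {𝕜 X : Type*} [NormedAddCommGroup X]

theorem of_tendsto_toWeakSpace [NontriviallyNormedField 𝕜] [NormedSpace 𝕜 X] {x : ℕ → X} {x₀ : X}
    (hx : Tendsto (fun n => toWeakSpace 𝕜 X (x n)) atTop (𝓝 (toWeakSpace 𝕜 X x₀))) :
    WeaklyConvergesTo (𝕜 := 𝕜) x x₀ :=
  fun f => ((WeakBilin.eval_continuous (topDualPairing 𝕜 X).flip f).tendsto _).comp hx

theorem comp_tendsto [NontriviallyNormedField 𝕜] [NormedSpace 𝕜 X] {x : ℕ → X} {x₀ : X}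
    (hx : WeaklyConvergesTo (𝕜 := 𝕜) x x₀) {φ : ℕ → ℕ} (hφ : Tendsto φ atTop atTop) :
    WeaklyConvergesTo (𝕜 := 𝕜) (x ∘ φ) x₀ :=
  fun f => (hx f).comp hφ

theorem exists_subseq_of_isBounded_of_reflexive [RCLike 𝕜] [NormedSpace 𝕜 X]
    (hX : Function.Surjective (inclusionInDoubleDual 𝕜 X)) {s : Set X} (hs : IsBounded s)
    {x : ℕ → X} (hx : ∀ n, x n ∈ s) :
    ∃ (a : X) (φ : ℕ → ℕ), StrictMono φ ∧ WeaklyConvergesTo (𝕜 := 𝕜) (x ∘ φ) a := by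
  obtain ⟨a, -, φ, hφ, ha⟩ :=
    isSeqCompact_of_isCompact_weakSpace
      (isCompact_closure_weakSpace_of_isBounded_of_reflexive hX hs)
      fun n => subset_closure (Set.mem_image_of_mem (toWeakSpace 𝕜 X) (hx n))
  exact ⟨(toWeakSpace 𝕜 X).symm a, φ, hφ, of_tendsto_toWeakSpace ha⟩

end WeaklyConvergesTo

theorem isCompact_closure_of_forall_exists_subseq_tendsto {Z : Type*} [PseudoMetricSpace Z]
    {s : Set Z} (hs : ∀ w : ℕ → Z, (∀ n, w n ∈ s) →
      ∃ (a : Z) (φ : ℕ → ℕ), StrictMono φ ∧ Tendsto (w ∘ φ) atTop (𝓝 a)) :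
    IsCompact (closure s) := by
  refine IsSeqCompact.isCompact fun z hz => ?_
  choose w hws hzw using fun n : ℕ =>
    Metric.mem_closure_iff.mp (hz n) (1 / ((n : ℝ) + 1)) Nat.one_div_pos_of_nat
  obtain ⟨a, φ, hφ, hwa⟩ := hs w hws
  have dist_tendsto_zero : Tendsto (fun n => dist (z n) (w n)) atTop (𝓝 0) :=
    squeeze_zero (fun _ => dist_nonneg) (fun n => (hzw n).le)
      tendsto_one_div_add_atTop_nhds_zero_nat
  have hza : Tendsto (z ∘ φ) atTop (𝓝 a) :=
    (tendsto_iff_of_dist (dist_tendsto_zero.comp hφ.tendsto_atTop)).mpr hwa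
  exact ⟨a, isClosed_closure.mem_of_tendsto hza (.of_forall fun n => hz (φ n)), φ, hφ, hza⟩

theorem compact_of_weak_to_strong_general {𝕜 X Y Z : Type*} [RCLike 𝕜]
    [NormedAddCommGroup X] [NormedSpace 𝕜 X] [NormedAddCommGroup Y] [NormedSpace 𝕜 Y]
    [PseudoMetricSpace Z]
    (hX : Function.Surjective (inclusionInDoubleDual 𝕜 X))
    (hY : Function.Surjective (inclusionInDoubleDual 𝕜 Y))
    (T : X → Y → Z)
    (h : ∀ (x : ℕ → X) (y : ℕ → Y) (x₀ : X) (y₀ : Y),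
      WeaklyConvergesTo (𝕜 := 𝕜) x x₀ → WeaklyConvergesTo (𝕜 := 𝕜) y y₀ →
      ∃ z : Z, Tendsto (fun n => T (x n) (y n)) atTop (𝓝 z))
    {s : Set X} {t : Set Y} (hs : IsBounded s) (ht : IsBounded t) :
    IsCompact (closure (Set.image2 T s t)) := by
  refine isCompact_closure_of_forall_exists_subseq_tendsto fun w hw => ?_
  choose x hxs y hyt hxyw using hw
  obtain ⟨x₀, φ, hφ, hx⟩ := WeaklyConvergesTo.exists_subseq_of_isBounded_of_reflexive hX hs hxs
  obtain ⟨y₀, ψ, hψ, hy⟩ :=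
    WeaklyConvergesTo.exists_subseq_of_isBounded_of_reflexive hY ht fun n => hyt (φ n)
  obtain ⟨z, hz⟩ := h _ _ x₀ y₀ (hx.comp_tendsto hψ.tendsto_atTop) hy
  exact ⟨z, φ ∘ ψ, hφ.comp hψ, hz.congr fun n => hxyw (φ (ψ n))⟩

/-- Proposition 2.3 (i): if `X` and `Y` are reflexive Banach spaces and a continuous bilinear
operator `T : X × Y → Z` maps pairs of weakly convergent sequences to strongly convergent
sequences, then `T` is compact. -/
theorem compact_of_weak_to_strong
    {X Y Z : Type*} [NormedAddCommGroup X] [NormedSpace ℝ X] [CompleteSpace X]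
    [NormedAddCommGroup Y] [NormedSpace ℝ Y] [CompleteSpace Y]
    [NormedAddCommGroup Z] [NormedSpace ℝ Z]
    (hX : Function.Surjective (inclusionInDoubleDual ℝ X))
    (hY : Function.Surjective (inclusionInDoubleDual ℝ Y))
    (T : X →L[ℝ] Y →L[ℝ] Z)
    (h : ∀ (x : ℕ → X) (y : ℕ → Y) (x₀ : X) (y₀ : Y),
      WeaklyConvergesTo (𝕜 := ℝ) x x₀ → WeaklyConvergesTo (𝕜 := ℝ) y y₀ →
      ∃ z : Z, Tendsto (fun n => T (x n) (y n)) atTop (𝓝 z)) :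
    IsCompactBilinear T :=
  compact_of_weak_to_strong_general hX hY (fun x y => T x y) h isBounded_closedBall
    isBounded_closedBall
end

section
/- Let X be a finite-dimensional normed space, Y and Z Banach spaces, and T : X × Y → Z a compact continuous bilinear operator. Then the transpose T^{*1} : Z^* × Y → X^*, defined by T^{*1}(z^*, y)(x) = z^*(T(x, y)), is a compact bilinear operator. -/
open Filter Topology Metric

/-- A bilinear map is compact if the closure of the image of the product of the
closed unit balls is compact. -/
def IsCompactBilinearMap {X Y Z : Type*} [NormedAddCommGroup X] [NormedSpace ℝ X]
    [NormedAddCommGroup Y] [NormedSpace ℝ Y] [NormedAddCommGroup Z] [NormedSpace ℝ Z]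
    (f : X → Y → Z) : Prop :=
  IsCompact (closure (Set.image2 f (closedBall (0 : X) 1) (closedBall (0 : Y) 1)))

section ContinuousBilinear

variable {𝕜 X Y Z : Type*} [NontriviallyNormedField 𝕜]
  [SeminormedAddCommGroup X] [NormedSpace 𝕜 X] [SeminormedAddCommGroup Y] [NormedSpace 𝕜 Y]
  [SeminormedAddCommGroup Z] [NormedSpace 𝕜 Z]

/-- The first transpose `(g, y) ↦ (x ↦ g (T x y))` of a continuous bilinear map `T : X × Y → Z`, as
a continuous bilinear map. For `W = 𝕜` this is the usual `T^{*1} : Z^* × Y → X^*`; the target `W` of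
the functionals is kept arbitrary. -/
noncomputable def transposeOne (T : X →L[𝕜] Y →L[𝕜] Z)
    (W : Type*) [SeminormedAddCommGroup W] [NormedSpace 𝕜 W] :
    (Z →L[𝕜] W) →L[𝕜] Y →L[𝕜] X →L[𝕜] W :=
  (ContinuousLinearMap.compL 𝕜 X Z W).bilinearComp (.id 𝕜 _) T.flip

theorem transposeOne_apply (T : X →L[𝕜] Y →L[𝕜] Z)
    {W : Type*} [SeminormedAddCommGroup W] [NormedSpace 𝕜 W] (g : Z →L[𝕜] W) (y : Y) :
    transposeOne T W g y = g.comp (T.flip y) :=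
  rfl

theorem isBounded_image2_bilinear (B : X →L[𝕜] Y →L[𝕜] Z) {s : Set X} {t : Set Y}
    (hs : Bornology.IsBounded s) (ht : Bornology.IsBounded t) :
    Bornology.IsBounded (Set.image2 (fun x y => B x y) s t) := by
  obtain ⟨r, hr⟩ := hs.exists_norm_le
  obtain ⟨ρ, hρ⟩ := ht.exists_norm_le
  refine isBounded_iff_forall_norm_le.mpr ⟨‖B‖ * r * ρ, ?_⟩
  rintro _ ⟨x, hx, y, hy, rfl⟩
  exact B.le_of_opNorm₂_le_of_le le_rfl (hr x hx) (hρ y hy)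

end ContinuousBilinear

section Compactness

variable {X Y Z : Type*} [NormedAddCommGroup X] [NormedSpace ℝ X]
  [NormedAddCommGroup Y] [NormedSpace ℝ Y] [NormedAddCommGroup Z] [NormedSpace ℝ Z]

theorem isCompactBilinearMap_of_properSpace [ProperSpace Z] (B : X →L[ℝ] Y →L[ℝ] Z) :
    IsCompactBilinearMap fun x y => B x y :=
  (isBounded_image2_bilinear B isBounded_closedBall isBounded_closedBall).isCompact_closure

theorem transpose_one_compact_of_finiteDimensional_general [FiniteDimensional ℝ X]
    {W : Type*} [NormedAddCommGroup W] [NormedSpace ℝ W] [FiniteDimensional ℝ W]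
    (T : X →L[ℝ] Y →L[ℝ] Z) :
    IsCompactBilinearMap fun (g : Z →L[ℝ] W) (y : Y) => g.comp (T.flip y) := by
  have : ProperSpace (X →L[ℝ] W) := FiniteDimensional.proper ℝ _
  simpa only [transposeOne_apply] using isCompactBilinearMap_of_properSpace (transposeOne T W)

end Compactness

/-- If `X` is a finite-dimensional normed space, `Y`, `Z` are Banach spaces and
`T : X × Y → Z` is a compact continuous bilinear operator, then the transpose
`T^{*1} : Z^* × Y → X^*`, given by `T^{*1}(z^*, y)(x) = z^*(T(x, y))`, is a compact
bilinear operator. -/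
theorem transpose_one_compact_of_finiteDimensional
    {X Y Z : Type*} [NormedAddCommGroup X] [NormedSpace ℝ X] [FiniteDimensional ℝ X]
    [NormedAddCommGroup Y] [NormedSpace ℝ Y] [CompleteSpace Y]
    [NormedAddCommGroup Z] [NormedSpace ℝ Z] [CompleteSpace Z]
    (T : X →L[ℝ] Y →L[ℝ] Z)
    (hT : IsCompactBilinearMap fun x y => T x y) :
    IsCompactBilinearMap fun (g : Z →L[ℝ] ℝ) (y : Y) => g.comp (T.flip y) :=
  transpose_one_compact_of_finiteDimensional_general T
end

section
/- Let X, Y, Z be Banach spaces and T : X × Y → Z a continuous bilinear operator such that T is compact and the transpose T^{*1} : Z^* × Y → X^* is compact. If {f_n} converges weakly to f in X and {g_n} converges weakly to g in Y, then T(f_n, g_n) converges strongly to T(f, g) in Z. -/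
open Filter Topology Metric

/-!
Compactness of the first transpose upgrades weak convergence `f n ⇀ f₀` to convergence
`T (f n) → T f₀` in the operator norm of `Y →L Z`. Indeed, by Banach–Steinhaus the functionals
`φ ↦ φ (f n)` are equicontinuous on `X*`, so they converge uniformly on the compact closure of
`{φ ∘ T(·, y) | ‖φ‖ ≤ 1, ‖y‖ ≤ 1}`, and the supremum over this set of their distance to
`φ ↦ φ f₀` is `‖T (f n) - T f₀‖`. Since `g n` is bounded, `T (f n) (g n) - T f₀ (g n) → 0`, and
`T f₀ (g n) → T f₀ g₀` because the operator `T f₀` is compact.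
-/

namespace WeaklyConvergesTo

section NontriviallyNormedField

variable {𝕜 X Y : Type*} [NontriviallyNormedField 𝕜] [NormedAddCommGroup X] [NormedSpace 𝕜 X]
  [NormedAddCommGroup Y] [NormedSpace 𝕜 Y] {x : ℕ → X} {x₀ : X}

protected theorem map (hx : WeaklyConvergesTo (𝕜 := 𝕜) x x₀) (S : X →L[𝕜] Y) :
    WeaklyConvergesTo (𝕜 := 𝕜) (fun n => S (x n)) (S x₀) :=
  fun φ => hx (φ.comp S)

theorem tendsto_of_isCompact [SeparatingDual 𝕜 X] (hx : WeaklyConvergesTo (𝕜 := 𝕜) x x₀)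
    {K : Set X} (hK : IsCompact K) (hxK : ∀ n, x n ∈ K) : Tendsto x atTop (𝓝 x₀) := by
  refine hK.tendsto_nhds_of_unique_mapClusterPt (.of_forall hxK) fun a _ ha => ?_
  refine (SeparatingDual.eq_iff_forall_dual_eq (R := 𝕜)).2 fun φ => ?_
  have cluster : MapClusterPt (φ a) atTop (φ ∘ x) :=
    ha.continuousAt_comp φ.continuous.continuousAt
  exact eq_of_nhds_neBot (ClusterPt.mono cluster (hx φ))

end NontriviallyNormedField

section RCLike

variable {𝕜 X Y Z : Type*} [RCLike 𝕜] [NormedAddCommGroup X] [NormedSpace 𝕜 X]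
  [NormedAddCommGroup Y] [NormedSpace 𝕜 Y] [NormedAddCommGroup Z] [NormedSpace 𝕜 Z]
  {x : ℕ → X} {x₀ : X}

theorem bddAbove_range_norm (hx : WeaklyConvergesTo (𝕜 := 𝕜) x x₀) :
    BddAbove (Set.range fun n => ‖x n‖) := by
  have eval_bounded (φ : StrongDual 𝕜 X) :
      ∃ C, ∀ n, ‖NormedSpace.inclusionInDoubleDualLi 𝕜 (x n) φ‖ ≤ C := by
    obtain ⟨C, hC⟩ := (hx φ).norm.bddAbove_range
    exact ⟨C, Set.forall_mem_range.1 hC⟩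
  obtain ⟨C, hC⟩ := banach_steinhaus eval_bounded
  simp only [LinearIsometry.norm_map] at hC
  exact ⟨C, Set.forall_mem_range.2 hC⟩

theorem equicontinuous_eval (hx : WeaklyConvergesTo (𝕜 := 𝕜) x x₀) :
    Equicontinuous fun n (φ : StrongDual 𝕜 X) => φ (x n) := by
  let J := NormedSpace.inclusionInDoubleDualLi 𝕜 (E := X)
  have bounded : BddAbove (Set.range fun n => ‖J (x n)‖) := by
    simpa only [LinearIsometry.norm_map] using hx.bddAbove_range_norm
  exact ((NormedSpace.equicontinuous_TFAE fun n => J (x n)).out 7 1).1 bounded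

theorem tendstoUniformlyOn_eval (hx : WeaklyConvergesTo (𝕜 := 𝕜) x x₀)
    {K : Set (StrongDual 𝕜 X)} (hK : IsCompact K) :
    TendstoUniformlyOn (fun n φ => φ (x n)) (fun φ => φ x₀) atTop K := by
  have pointwise : Tendsto ((⋃₀ {K}).domRestrict ∘ fun n (φ : StrongDual 𝕜 X) => φ (x n)) atTop
      (𝓝 ((⋃₀ {K}).domRestrict fun φ => φ x₀)) :=
    tendsto_pi_nhds.2 fun φ => hx φ
  have uniform := (EquicontinuousOn.tendsto_uniformOnFun_iff_pi' (by simpa using hK)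
    (fun _ _ => hx.equicontinuous_eval.equicontinuousOn _) _ _).2 pointwise
  exact UniformOnFun.tendsto_iff_tendstoUniformlyOn.1 uniform K rfl

theorem tendsto_clm_apply_of_isCompact_transpose (hx : WeaklyConvergesTo (𝕜 := 𝕜) x x₀)
    (T : X →L[𝕜] Y →L[𝕜] Z)
    (hT : IsCompact (closure (Set.image2 (fun (φ : StrongDual 𝕜 Z) y => φ.comp (T.flip y))
      (closedBall 0 1) (closedBall 0 1)))) :
    Tendsto (fun n => T (x n)) atTop (𝓝 (T x₀)) := by
  refine nhds_basis_closedBall.tendsto_right_iff.2 fun ε hε => ?_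
  filter_upwards [tendstoUniformlyOn_iff.1 (hx.tendstoUniformlyOn_eval hT) ε hε] with n hn
  rw [mem_closedBall, dist_comm, dist_eq_norm]
  refine ContinuousLinearMap.opNorm_le_of_unit_norm hε.le fun y hy => ?_
  obtain ⟨φ, hφ, hφ_norm⟩ := exists_dual_vector'' 𝕜 ((T x₀ - T (x n)) y)
  have mem : φ.comp (T.flip y) ∈ Set.image2 (fun (φ : StrongDual 𝕜 Z) y => φ.comp (T.flip y))
      (closedBall 0 1) (closedBall 0 1) :=
    Set.mem_image2_of_mem (mem_closedBall_zero_iff.2 hφ) (mem_closedBall_zero_iff.2 hy.le)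
  calc ‖(T x₀ - T (x n)) y‖ = ‖φ ((T x₀ - T (x n)) y)‖ := by
        rw [hφ_norm, RCLike.norm_ofReal, abs_norm]
    _ = dist (φ.comp (T.flip y) x₀) (φ.comp (T.flip y) (x n)) := by simp [dist_eq_norm]
    _ ≤ ε := (hn _ (subset_closure mem)).le

theorem tendsto_of_isCompactOperator (hx : WeaklyConvergesTo (𝕜 := 𝕜) x x₀) {S : X →L[𝕜] Y}
    (hS : IsCompactOperator S) : Tendsto (fun n => S (x n)) atTop (𝓝 (S x₀)) := by
  have bounded : Bornology.IsBounded (Set.range x) := by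
    obtain ⟨C, hC⟩ := hx.bddAbove_range_norm
    exact isBounded_iff_forall_norm_le.2 ⟨C, Set.forall_mem_range.2 fun n => hC ⟨n, rfl⟩⟩
  obtain ⟨K, hK, hSK⟩ := IsCompactOperator.image_subset_compact_of_bounded
    (f := S.toLinearMap) hS bounded
  exact (hx.map S).tendsto_of_isCompact hK fun n =>
    hSK (Set.mem_image_of_mem S (Set.mem_range_self n))

end RCLike

end WeaklyConvergesTo

theorem isCompactOperator_apply_of_isCompact_closure_image2
    {𝕜 X Y Z : Type*} [NontriviallyNormedField 𝕜] [NormedAddCommGroup X] [NormedSpace 𝕜 X]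
    [NormedAddCommGroup Y] [NormedSpace 𝕜 Y] [NormedAddCommGroup Z] [NormedSpace 𝕜 Z]
    (T : X →L[𝕜] Y →L[𝕜] Z)
    (hT : IsCompact (closure (Set.image2 (fun x y => T x y) (closedBall 0 1) (closedBall 0 1))))
    (x : X) : IsCompactOperator (T x) := by
  have of_mem_unitBall {u : X} (hu : u ∈ closedBall 0 1) : IsCompactOperator (T u) :=
    (isCompactOperator_iff_image_closedBall_subset_compact (T u).toLinearMap one_pos).2
      ⟨_, hT, (Set.image_subset_image2_right (f := fun x y => T x y) hu).trans subset_closure⟩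
  obtain ⟨c, hc⟩ := NormedField.exists_lt_norm 𝕜 ‖x‖
  have hc_pos : 0 < ‖c‖ := (norm_nonneg x).trans_lt hc
  have mem : c⁻¹ • x ∈ closedBall (0 : X) 1 := by
    rw [mem_closedBall_zero_iff, norm_smul, norm_inv, inv_mul_le_one₀ hc_pos]
    exact hc.le
  have eq : T x = c • T (c⁻¹ • x) := by
    rw [map_smul, smul_inv_smul₀ (norm_pos_iff.1 hc_pos)]
  rw [eq]
  exact (of_mem_unitBall mem).smul c

theorem strong_convergence_of_compact_and_transpose_compact_general
    {𝕜 X Y Z : Type*} [RCLike 𝕜] [NormedAddCommGroup X] [NormedSpace 𝕜 X]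
    [NormedAddCommGroup Y] [NormedSpace 𝕜 Y] [NormedAddCommGroup Z] [NormedSpace 𝕜 Z]
    (T : X →L[𝕜] Y →L[𝕜] Z) {f : ℕ → X} {g : ℕ → Y} {f₀ : X} {g₀ : Y}
    (hT : IsCompactOperator (T f₀))
    (hT1 : IsCompact (closure (Set.image2 (fun (φ : StrongDual 𝕜 Z) y => φ.comp (T.flip y))
      (closedBall 0 1) (closedBall 0 1))))
    (hf : WeaklyConvergesTo (𝕜 := 𝕜) f f₀) (hg : WeaklyConvergesTo (𝕜 := 𝕜) g g₀) :
    Tendsto (fun n => T (f n) (g n)) atTop (𝓝 (T f₀ g₀)) := by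
  have operator_sub : Tendsto (fun n => T (f n) - T f₀) atTop (𝓝 0) :=
    tendsto_sub_nhds_zero_iff.2 (hf.tendsto_clm_apply_of_isCompact_transpose T hT1)
  have apply_sub : Tendsto (fun n => (T (f n) - T f₀) (g n)) atTop (𝓝 0) :=
    operator_sub.op_zero_isBoundedUnder_le hg.bddAbove_range_norm.isBoundedUnder_of_range
      (fun S y => S y) fun S y => S.le_opNorm y
  have fixed_operator : Tendsto (fun n => T f₀ (g n)) atTop (𝓝 (T f₀ g₀)) :=
    hg.tendsto_of_isCompactOperator hT
  simpa using apply_sub.add fixed_operator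

/-- If `T : X × Y → Z` is a continuous bilinear operator on Banach spaces such that both `T`
and its first transpose `T^{*1} : Z^* × Y → X^*` are compact, then `T` maps pairs of weakly
convergent sequences to strongly convergent sequences. -/
theorem strong_convergence_of_compact_and_transpose_compact
    {X Y Z : Type*} [NormedAddCommGroup X] [NormedSpace ℝ X] [CompleteSpace X]
    [NormedAddCommGroup Y] [NormedSpace ℝ Y] [CompleteSpace Y]
    [NormedAddCommGroup Z] [NormedSpace ℝ Z] [CompleteSpace Z]
    (T : X →L[ℝ] Y →L[ℝ] Z)
    (hT : IsCompactBilinearMap fun x y => T x y)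
    (hT1 : IsCompactBilinearMap fun (g : Z →L[ℝ] ℝ) (y : Y) => g.comp (T.flip y))
    (f : ℕ → X) (g : ℕ → Y) (f₀ : X) (g₀ : Y)
    (hf : WeaklyConvergesTo (𝕜 := ℝ) f f₀) (hg : WeaklyConvergesTo (𝕜 := ℝ) g g₀) :
    Tendsto (fun n => T (f n) (g n)) atTop (𝓝 (T f₀ g₀)) := by
  exact strong_convergence_of_compact_and_transpose_compact_general T
    (isCompactOperator_apply_of_isCompact_closure_image2 T hT f₀) hT1 hf hg
end
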